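/- Let p, q, V, W : ℝ² → ℝ be smooth with p and q nowhere vanishing, satisfying the compatibility conditions, and let ψ : ℝ² → ℂ⁴ be a smooth solution of the Lie–Wilczynski system. Assume that at every point the pseudo-Hermitian products of the four vectors ψ, ∂₁ψ, ∂₂ψ, ∂₁∂₂ψ are: ⟨ψ, ∂₁∂₂ψ⟩ = ⟨∂₁∂₂ψ, ψ⟩ = −1, ⟨∂₁ψ, ∂₂ψ⟩ = ⟨∂₂ψ, ∂₁ψ⟩ = 1, ⟨∂₁∂₂ψ, ∂₁∂₂ψ⟩ = −p·q, and all other products among these four vectors vanish. Define the ℝ⁶-valued maps U = −2·Im(ψ ∧ ∂₁ψ) and S = 2·Re(ψ ∧ ∂₂ψ) (real and imaginary parts taken componentwise in ℂ⁶). Then, with respect to the real bilinear form Q(x,y) = −x₀y₀ + x₁y₁ + x₂y₂ + x₃y₃ + x₄y₄ − x₅y₅ on ℝ⁶, one has Q(U,U) = 0, Q(S,S) = 0, and each of the three vectors U, ∂₂U, ∂₂²U is Q-orthogonal to each of the three vectors S, ∂₁S, ∂₁²S at every point. -/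

import Mathlib

/-!
The six entries of the two triples are `−2 Im` or `2 Re` of complex combinations of wedge products
of the frame `a = ψ`, `b = ∂₁ψ`, `c = ∂₂ψ`, `d = ∂₁∂₂ψ`. The second-order entries involve
`∂₂(∂₁∂₂ψ)` and `∂₁(∂₁∂₂ψ)`; exchanging partial derivatives and differentiating the Lie–Wilczynski
system brings these back to the frame, and the imaginary parts of the coefficients cancel
(`wedgeC_reduce2`, `wedgeC_reduce1`), giving

* `∂₂U = −2 Im (c ∧ b + a ∧ d)`, `∂₂²U = −2 Im (W a ∧ b + 2 c ∧ d + pq a ∧ c)`,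
* `∂₁S = 2 Re (b ∧ c + a ∧ d)`, `∂₁²S = 2 Re (V a ∧ c + 2 b ∧ d + pq a ∧ b)`.

The rest is pointwise: `Q(−2 Im w, 2 Re v)` is `−2` times the imaginary part of the sum of the
complex bilinear and the Hermitian products of `w` and `v` (`Q6_imVec_reVec`). On wedge products
the former is half a 4×4 determinant (`bil6_wedgeC`), and these determinants cancel for every pair;
the latter is a 2×2 minor of the Gram matrix (`herm6_wedgeC`), hence real.
`frame_orthogonality` assembles these facts.
-/

open Complex ComplexConjugate

noncomputable section

/-- Partial derivative in the first variable of a two-variable function. -/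
def pd1 {E : Type*} [NormedAddCommGroup E] [NormedSpace ℝ E]
    (f : ℝ → ℝ → E) (x y : ℝ) : E := deriv (fun t => f t y) x

/-- Partial derivative in the second variable of a two-variable function. -/
def pd2 {E : Type*} [NormedAddCommGroup E] [NormedSpace ℝ E]
    (f : ℝ → ℝ → E) (x y : ℝ) : E := deriv (fun t => f x t) y

/-- The pseudo-Hermitian form of signature (2,2) on ℂ⁴:
`⟨a,b⟩ = −a₀·conj(b₃) + a₁·conj(b₂) + a₂·conj(b₁) − a₃·conj(b₀)`. -/
def herm4 (a b : Fin 4 → ℂ) : ℂ :=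
  -(a 0 * conj (b 3)) + a 1 * conj (b 2) + a 2 * conj (b 1) - a 3 * conj (b 0)

/-- The wedge product of two vectors of ℂ⁴, as a vector in ℂ⁶, in the explicit
coordinates `y₀ = (p₀₂ − p₃₁)/2, y₁ = (p₀₂ + p₃₁)/2, y₂ = (p₀₃ + p₁₂)/2,
y₃ = (p₀₃ − p₁₂)/(2i), y₄ = (p₀₁ − p₂₃)/(2i), y₅ = (p₀₁ + p₂₃)/(2i)`,
where `p_{ij} = aᵢbⱼ − aⱼbᵢ`. -/
def wedgeC (a b : Fin 4 → ℂ) : Fin 6 → ℂ :=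
  ![((a 0 * b 2 - a 2 * b 0) - (a 3 * b 1 - a 1 * b 3)) / 2,
    ((a 0 * b 2 - a 2 * b 0) + (a 3 * b 1 - a 1 * b 3)) / 2,
    ((a 0 * b 3 - a 3 * b 0) + (a 1 * b 2 - a 2 * b 1)) / 2,
    ((a 0 * b 3 - a 3 * b 0) - (a 1 * b 2 - a 2 * b 1)) / (2 * Complex.I),
    ((a 0 * b 1 - a 1 * b 0) - (a 2 * b 3 - a 3 * b 2)) / (2 * Complex.I),
    ((a 0 * b 1 - a 1 * b 0) + (a 2 * b 3 - a 3 * b 2)) / (2 * Complex.I)]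

/-- The real bilinear form of signature (4,2) on ℝ⁶ (the Lie quadric form). -/
def Q6 (x y : Fin 6 → ℝ) : ℝ :=
  -(x 0 * y 0) + x 1 * y 1 + x 2 * y 2 + x 3 * y 3 + x 4 * y 4 - x 5 * y 5

/-- The pseudo-Hermitian form of signature (4,2) on ℂ⁶. -/
def herm6 (x y : Fin 6 → ℂ) : ℂ :=
  -(x 0 * conj (y 0)) + x 1 * conj (y 1) + x 2 * conj (y 2) + x 3 * conj (y 3)
    + x 4 * conj (y 4) - x 5 * conj (y 5)

/-- The complex bilinear form on ℂ⁶. -/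
def bil6 (x y : Fin 6 → ℂ) : ℂ :=
  -(x 0 * y 0) + x 1 * y 1 + x 2 * y 2 + x 3 * y 3 + x 4 * y 4 - x 5 * y 5

/-- The Euclidean dot product on ℝ³. -/
def dot3 (u v : Fin 3 → ℝ) : ℝ := u 0 * v 0 + u 1 * v 1 + u 2 * v 2

/-- The Schwarzian derivative `S(h) = h‴/h′ − (3/2)(h″/h′)²`. -/
def schwarzian (h : ℝ → ℝ) (x : ℝ) : ℝ :=
  deriv (deriv (deriv h)) x / deriv h x - (3/2) * (deriv (deriv h) x / deriv h x) ^ 2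

/-- `(∂₁ + c)² u`, an abbreviation for `∂₁(∂₁u + c·u) + c·(∂₁u + c·u)`. -/
def msq1 (c u : ℝ → ℝ → ℂ) : ℝ → ℝ → ℂ := fun x y =>
  pd1 (fun x' y' => pd1 u x' y' + c x' y' * u x' y') x y
    + c x y * (pd1 u x y + c x y * u x y)

/-- `(∂₂ + c)² u`, an abbreviation for `∂₂(∂₂u + c·u) + c·(∂₂u + c·u)`. -/
def msq2 (c u : ℝ → ℝ → ℂ) : ℝ → ℝ → ℂ := fun x y =>
  pd2 (fun x' y' => pd2 u x' y' + c x' y' * u x' y') x y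
    + c x y * (pd2 u x y + c x y * u x y)

/-- The real part map `U = −2·Im(ψ ∧ ∂₁ψ)` used to define the first curvature sphere. -/
def Uvec (ψ : ℝ → ℝ → Fin 4 → ℂ) : ℝ → ℝ → Fin 6 → ℝ :=
  fun x y i => -2 * (wedgeC (ψ x y) (pd1 ψ x y) i).im

/-- The real part map `S = 2·Re(ψ ∧ ∂₂ψ)` used to define the second curvature sphere. -/
def Svec (ψ : ℝ → ℝ → Fin 4 → ℂ) : ℝ → ℝ → Fin 6 → ℝ :=
  fun x y i => 2 * (wedgeC (ψ x y) (pd2 ψ x y) i).re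


/-! ### Partial derivatives of smooth maps -/

section Calculus

variable {E : Type*} [NormedAddCommGroup E] [NormedSpace ℝ E]

lemma hasDerivAt_slice1 {f : ℝ → ℝ → E}
    (hf : ContDiff ℝ (⊤ : ℕ∞) (fun z : ℝ × ℝ => f z.1 z.2)) (x y : ℝ) :
    HasDerivAt (fun t => f t y) (fderiv ℝ (fun z : ℝ × ℝ => f z.1 z.2) (x, y) (1, 0)) x := by
  have h := (hf.differentiable (by simp) (x, y)).hasFDerivAt
  exact h.comp_hasDerivAt x ((hasDerivAt_id x).prodMk (hasDerivAt_const x y))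

lemma hasDerivAt_slice2 {f : ℝ → ℝ → E}
    (hf : ContDiff ℝ (⊤ : ℕ∞) (fun z : ℝ × ℝ => f z.1 z.2)) (x y : ℝ) :
    HasDerivAt (fun t => f x t) (fderiv ℝ (fun z : ℝ × ℝ => f z.1 z.2) (x, y) (0, 1)) y := by
  have h := (hf.differentiable (by simp) (x, y)).hasFDerivAt
  exact h.comp_hasDerivAt y ((hasDerivAt_const y x).prodMk (hasDerivAt_id y))

lemma hasDerivAt_pd1 {f : ℝ → ℝ → E}
    (hf : ContDiff ℝ (⊤ : ℕ∞) (fun z : ℝ × ℝ => f z.1 z.2)) (x y : ℝ) :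
    HasDerivAt (fun t => f t y) (pd1 f x y) x :=
  (hasDerivAt_slice1 hf x y).differentiableAt.hasDerivAt

lemma hasDerivAt_pd2 {f : ℝ → ℝ → E}
    (hf : ContDiff ℝ (⊤ : ℕ∞) (fun z : ℝ × ℝ => f z.1 z.2)) (x y : ℝ) :
    HasDerivAt (fun t => f x t) (pd2 f x y) y :=
  (hasDerivAt_slice2 hf x y).differentiableAt.hasDerivAt

lemma pd1_eq_fderiv {f : ℝ → ℝ → E}
    (hf : ContDiff ℝ (⊤ : ℕ∞) (fun z : ℝ × ℝ => f z.1 z.2)) :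
    (fun z : ℝ × ℝ => pd1 f z.1 z.2)
      = fun z => fderiv ℝ (fun z : ℝ × ℝ => f z.1 z.2) z (1, 0) :=
  funext fun z => (hasDerivAt_slice1 hf z.1 z.2).deriv

lemma pd2_eq_fderiv {f : ℝ → ℝ → E}
    (hf : ContDiff ℝ (⊤ : ℕ∞) (fun z : ℝ × ℝ => f z.1 z.2)) :
    (fun z : ℝ × ℝ => pd2 f z.1 z.2)
      = fun z => fderiv ℝ (fun z : ℝ × ℝ => f z.1 z.2) z (0, 1) :=
  funext fun z => (hasDerivAt_slice2 hf z.1 z.2).deriv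

lemma contDiff_pd1 {f : ℝ → ℝ → E}
    (hf : ContDiff ℝ (⊤ : ℕ∞) (fun z : ℝ × ℝ => f z.1 z.2)) :
    ContDiff ℝ (⊤ : ℕ∞) (fun z : ℝ × ℝ => pd1 f z.1 z.2) := by
  rw [pd1_eq_fderiv hf]
  exact (hf.fderiv_right (by simp)).clm_apply contDiff_const

lemma contDiff_pd2 {f : ℝ → ℝ → E}
    (hf : ContDiff ℝ (⊤ : ℕ∞) (fun z : ℝ × ℝ => f z.1 z.2)) :
    ContDiff ℝ (⊤ : ℕ∞) (fun z : ℝ × ℝ => pd2 f z.1 z.2) := by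
  rw [pd2_eq_fderiv hf]
  exact (hf.fderiv_right (by simp)).clm_apply contDiff_const

lemma pd2_pd1_comm {f : ℝ → ℝ → E}
    (hf : ContDiff ℝ (⊤ : ℕ∞) (fun z : ℝ × ℝ => f z.1 z.2)) :
    pd2 (pd1 f) = pd1 (pd2 f) := by
  funext x y
  have hd : DifferentiableAt ℝ (fderiv ℝ (fun z : ℝ × ℝ => f z.1 z.2)) (x, y) :=
    (hf.fderiv_right (m := (⊤ : ℕ∞)) (by simp)).differentiable (by simp) _
  have hs : IsSymmSndFDerivAt ℝ (fun z : ℝ × ℝ => f z.1 z.2) (x, y) :=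
    hf.contDiffAt.isSymmSndFDerivAt (by simpa using WithTop.coe_le_coe.2 (le_top (a := (2 : ℕ∞))))
  have h1 := (hasDerivAt_slice2 (contDiff_pd1 hf) x y).deriv
  have h2 := (hasDerivAt_slice1 (contDiff_pd2 hf) x y).deriv
  rw [pd1_eq_fderiv hf, fderiv_clm_apply hd (differentiableAt_const _)] at h1
  rw [pd2_eq_fderiv hf, fderiv_clm_apply hd (differentiableAt_const _)] at h2
  change deriv (fun t => pd1 f x t) y = deriv (fun t => pd2 f t y) x
  rw [h1, h2]
  simpa using hs.eq (0, 1) (1, 0)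

end Calculus

/-! ### Differentiating wedge products -/

lemma hasDerivAt_wedgeC {f g : ℝ → Fin 4 → ℂ} {f' g' : Fin 4 → ℂ} {t : ℝ}
    (hf : HasDerivAt f f' t) (hg : HasDerivAt g g' t) :
    HasDerivAt (fun s => wedgeC (f s) (g s)) (wedgeC f' (g t) + wedgeC (f t) g') t := by
  rw [hasDerivAt_pi] at hf hg ⊢
  have P : ∀ i j : Fin 4, HasDerivAt (fun s => f s i * g s j - f s j * g s i)
      ((f' i * g t j + f t i * g' j) - (f' j * g t i + f t j * g' i)) t := fun i j =>
    ((hf i).mul (hg j)).sub ((hf j).mul (hg i))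
  intro i
  fin_cases i
  · exact (((P 0 2).sub (P 3 1)).div_const 2).congr_deriv (by simp [wedgeC]; ring)
  · exact (((P 0 2).add (P 3 1)).div_const 2).congr_deriv (by simp [wedgeC]; ring)
  · exact (((P 0 3).add (P 1 2)).div_const 2).congr_deriv (by simp [wedgeC]; ring)
  · exact (((P 0 3).sub (P 1 2)).div_const (2 * I)).congr_deriv (by simp [wedgeC]; ring)
  · exact (((P 0 1).sub (P 2 3)).div_const (2 * I)).congr_deriv (by simp [wedgeC]; ring)
  · exact (((P 0 1).add (P 2 3)).div_const (2 * I)).congr_deriv (by simp [wedgeC]; ring)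

/-- The real vector `−2 Im w`. -/
def imVec (w : Fin 6 → ℂ) : Fin 6 → ℝ := fun i => -2 * (w i).im

/-- The real vector `2 Re v`. -/
def reVec (v : Fin 6 → ℂ) : Fin 6 → ℝ := fun i => 2 * (v i).re

lemma hasDerivAt_imVec {F : ℝ → Fin 6 → ℂ} {F' : Fin 6 → ℂ} {t : ℝ} (h : HasDerivAt F F' t) :
    HasDerivAt (fun s => imVec (F s)) (imVec F') t := by
  rw [hasDerivAt_pi] at h ⊢
  intro i
  exact ((imCLM.hasFDerivAt (x := F t i)).comp_hasDerivAt t (h i)).const_mul (-2)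

lemma hasDerivAt_reVec {F : ℝ → Fin 6 → ℂ} {F' : Fin 6 → ℂ} {t : ℝ} (h : HasDerivAt F F' t) :
    HasDerivAt (fun s => reVec (F s)) (reVec F') t := by
  rw [hasDerivAt_pi] at h ⊢
  intro i
  exact ((reCLM.hasFDerivAt (x := F t i)).comp_hasDerivAt t (h i)).const_mul 2

/-! ### Pointwise algebra of the forms on `ℂ⁶` -/

/-- Mixed products of real and imaginary parts: the `Re w`, `Im v` terms cancel between the
bilinear and the sesquilinear form. -/
lemma Q6_imVec_reVec (w v : Fin 6 → ℂ) :
    Q6 (imVec w) (reVec v) = -2 * (bil6 w v + herm6 w v).im := by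
  simp [Q6, imVec, reVec, bil6, herm6]; ring

lemma Q6_imVec_self (w : Fin 6 → ℂ) :
    Q6 (imVec w) (imVec w) = 2 * (herm6 w w - bil6 w w).re := by
  simp [Q6, imVec, bil6, herm6]; ring

lemma Q6_reVec_self (v : Fin 6 → ℂ) :
    Q6 (reVec v) (reVec v) = 2 * (herm6 v v + bil6 v v).re := by
  simp [Q6, reVec, bil6, herm6]; ring

/-- The Hermitian form on `ℂ⁶` is `−1/2` times the one induced on `Λ²ℂ⁴` by `herm4`. -/
lemma herm6_wedgeC (a b c d : Fin 4 → ℂ) :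
    herm6 (wedgeC a b) (wedgeC c d)
      = -(herm4 a c * herm4 b d - herm4 a d * herm4 b c) / 2 := by
  simp only [herm6, wedgeC, herm4, div_eq_mul_inv, mul_inv, inv_I]
  have h2 : conj (2 : ℂ) = 2 := conj_ofNat 2
  simp [h2]
  ring_nf
  simp
  ring

/-- The bilinear form of `a ∧ b` and `c ∧ d` is `det (a, b, c, d) / 2`, written out by Laplace
expansion along pairs. -/
lemma bil6_wedgeC (a b c d : Fin 4 → ℂ) :
    bil6 (wedgeC a b) (wedgeC c d) =
      ((a 0 * b 1 - a 1 * b 0) * (c 2 * d 3 - c 3 * d 2)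
        + (a 2 * b 3 - a 3 * b 2) * (c 0 * d 1 - c 1 * d 0)
        - (a 0 * b 2 - a 2 * b 0) * (c 1 * d 3 - c 3 * d 1)
        - (a 1 * b 3 - a 3 * b 1) * (c 0 * d 2 - c 2 * d 0)
        + (a 0 * b 3 - a 3 * b 0) * (c 1 * d 2 - c 2 * d 1)
        + (a 1 * b 2 - a 2 * b 1) * (c 0 * d 3 - c 3 * d 0)) / 2 := by
  simp [bil6, wedgeC]
  field_simp
  ring_nf
  simp
  try ring

lemma herm6_add_left (u v w : Fin 6 → ℂ) : herm6 (u + v) w = herm6 u w + herm6 v w := by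
  simp [herm6]; ring
lemma herm6_add_right (u v w : Fin 6 → ℂ) : herm6 w (u + v) = herm6 w u + herm6 w v := by
  simp [herm6]; ring
lemma herm6_smul_left (c : ℝ) (u w : Fin 6 → ℂ) : herm6 (c • u) w = c * herm6 u w := by
  simp [herm6]; ring
lemma herm6_smul_right (c : ℝ) (u w : Fin 6 → ℂ) : herm6 w (c • u) = c * herm6 w u := by
  simp [herm6]; ring
lemma bil6_add_left (u v w : Fin 6 → ℂ) : bil6 (u + v) w = bil6 u w + bil6 v w := by
  simp [bil6]; ring
lemma bil6_add_right (u v w : Fin 6 → ℂ) : bil6 w (u + v) = bil6 w u + bil6 w v := by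
  simp [bil6]; ring
lemma bil6_smul_left (c : ℝ) (u w : Fin 6 → ℂ) : bil6 (c • u) w = c * bil6 u w := by
  simp [bil6]; ring
lemma bil6_smul_right (c : ℝ) (u w : Fin 6 → ℂ) : bil6 w (c • u) = c * bil6 w u := by
  simp [bil6]; ring

/-- Linear algebra of a single frame `a, b, c, d` (standing for `ψ, ∂₁ψ, ∂₂ψ, ∂₁∂₂ψ`) with the
prescribed Gram matrix: the Hermitian contributions are real because the Gram matrix is, and the
determinant contributions cancel in pairs. -/
lemma frame_orthogonality (a b c d : Fin 4 → ℂ) (r s t : ℝ)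
    (h : ∀ i j : Fin 4, herm4 (![a, b, c, d] i) (![a, b, c, d] j)
      = !![(0:ℂ), 0, 0, -1; 0, 0, 1, 0; 0, 1, 0, 0; -1, 0, 0, -((r : ℝ) : ℂ)] i j) :
    Q6 (imVec (wedgeC a b)) (imVec (wedgeC a b)) = 0 ∧
    Q6 (reVec (wedgeC a c)) (reVec (wedgeC a c)) = 0 ∧
    ∀ i j : Fin 3,
      Q6 (imVec (![wedgeC a b, wedgeC c b + wedgeC a d,
            t • wedgeC a b + (2 : ℝ) • wedgeC c d + r • wedgeC a c] i))
         (reVec (![wedgeC a c, wedgeC b c + wedgeC a d,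
            s • wedgeC a c + (2 : ℝ) • wedgeC b d + r • wedgeC a b] j)) = 0 := by
  have h00 : herm4 a a = 0 := h 0 0
  have h01 : herm4 a b = 0 := h 0 1
  have h02 : herm4 a c = 0 := h 0 2
  have h03 : herm4 a d = -1 := h 0 3
  have h10 : herm4 b a = 0 := h 1 0
  have h11 : herm4 b b = 0 := h 1 1
  have h12 : herm4 b c = 1 := h 1 2
  have h13 : herm4 b d = 0 := h 1 3
  have h20 : herm4 c a = 0 := h 2 0
  have h21 : herm4 c b = 1 := h 2 1
  have h22 : herm4 c c = 0 := h 2 2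
  have h23 : herm4 c d = 0 := h 2 3
  have h30 : herm4 d a = -1 := h 3 0
  have h31 : herm4 d b = 0 := h 3 1
  have h32 : herm4 d c = 0 := h 3 2
  have h33 : herm4 d d = -(r : ℂ) := h 3 3
  refine ⟨?_, ?_, ?_⟩
  · rw [Q6_imVec_self, herm6_wedgeC, h00, h01, bil6_wedgeC, zero_mul, zero_mul]
    ring_nf; simp
  · rw [Q6_reVec_self, herm6_wedgeC, h00, h02, bil6_wedgeC, zero_mul, zero_mul]
    ring_nf; simp
  · intro i j
    rw [Q6_imVec_reVec]
    set w := ![wedgeC a b, wedgeC c b + wedgeC a d,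
            t • wedgeC a b + (2 : ℝ) • wedgeC c d + r • wedgeC a c] i with hw
    set v := ![wedgeC a c, wedgeC b c + wedgeC a d,
            s • wedgeC a c + (2 : ℝ) • wedgeC b d + r • wedgeC a b] j with hv
    have hb : bil6 w v = 0 := by
      rw [hw, hv]
      fin_cases i <;> fin_cases j <;>
        simp [bil6_add_left, bil6_add_right, bil6_smul_left, bil6_smul_right, bil6_wedgeC] <;> try ring
    have hh : (herm6 w v).im = 0 := by
      rw [hw, hv]
      fin_cases i <;> fin_cases j <;>
        simp [herm6_add_left, herm6_add_right, herm6_smul_left, herm6_smul_right, herm6_wedgeC,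
          h00, h01, h02, h03, h10, h11, h12, h13, h20, h21, h22, h23, h30, h31, h32, h33]
    rw [hb, zero_add, hh, mul_zero]

/-! ### Reduction of the second derivatives to the frame -/

/-- In `∂₂²U` the coefficient of `ψ ∧ ∂₁ψ` is `2β + i ∂₁q = W`: the imaginary parts cancel. -/
lemma wedgeC_reduce2 (a b c d : Fin 4 → ℂ) (p q q₁ W : ℝ) (α β β₁ : ℂ)
    (hβ : β = ((W : ℂ) - I * (q₁ : ℂ)) / 2) :
    wedgeC ((I * (q : ℂ)) • b + β • a) b + wedgeC c d
      + (wedgeC c d + wedgeC a ((I * (q : ℂ)) • ((-(I * (p : ℂ))) • c + α • a)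
          + (I * (q₁ : ℂ)) • b + (β • b + β₁ • a)))
      = W • wedgeC a b + (2 : ℝ) • wedgeC c d + (p * q) • wedgeC a c := by
  subst hβ
  funext i
  fin_cases i <;> simp [wedgeC] <;> ring_nf <;> simp <;> ring

/-- In `∂₁²S` the coefficient of `ψ ∧ ∂₂ψ` is `2α − i ∂₂p = V`: the imaginary parts cancel. -/
lemma wedgeC_reduce1 (a b c d : Fin 4 → ℂ) (p q p₂ V : ℝ) (α β α₂ : ℂ)
    (hα : α = ((V : ℂ) + I * (p₂ : ℂ)) / 2) :
    wedgeC ((-(I * (p : ℂ))) • c + α • a) c + wedgeC b d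
      + (wedgeC b d + wedgeC a ((-(I * (p : ℂ))) • ((I * (q : ℂ)) • b + β • a)
          + (-(I * (p₂ : ℂ))) • c + (α • c + α₂ • a)))
      = V • wedgeC a c + (2 : ℝ) • wedgeC b d + (p * q) • wedgeC a b := by
  subst hα
  funext i
  fin_cases i <;> simp [wedgeC] <;> ring_nf <;> simp <;> ring

/-! ### The orthogonality theorem -/

/-- For a smooth solution `ψ` of the Lie–Wilczynski system with the
prescribed pseudo-Hermitian Gram matrix, the vectors `U = −2 Im(ψ ∧ ∂₁ψ)` and
`S = 2 Re(ψ ∧ ∂₂ψ)` are null for the Lie quadric form, and the triple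
`U, ∂₂U, ∂₂²U` is orthogonal to the triple `S, ∂₁S, ∂₁²S`. -/
theorem statement_0
    (p q V W : ℝ → ℝ → ℝ) (ψ : ℝ → ℝ → Fin 4 → ℂ)
    (hp : ContDiff ℝ (⊤ : ℕ∞) (fun z : ℝ × ℝ => p z.1 z.2))
    (hq : ContDiff ℝ (⊤ : ℕ∞) (fun z : ℝ × ℝ => q z.1 z.2))
    (hV : ContDiff ℝ (⊤ : ℕ∞) (fun z : ℝ × ℝ => V z.1 z.2))
    (hW : ContDiff ℝ (⊤ : ℕ∞) (fun z : ℝ × ℝ => W z.1 z.2))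
    (hψ : ContDiff ℝ (⊤ : ℕ∞) (fun z : ℝ × ℝ => ψ z.1 z.2))
    (hp0 : ∀ x y, p x y ≠ 0) (hq0 : ∀ x y, q x y ≠ 0)
    (hcomp1 : ∀ x y,
      pd2 (pd2 (pd2 p)) x y - 2 * W x y * pd2 p x y - p x y * pd2 W x y
        + pd1 (pd1 (pd1 q)) x y - 2 * V x y * pd1 q x y - q x y * pd1 V x y = 0)
    (hcomp2 : ∀ x y, pd1 W x y = 2 * q x y * pd2 p x y + p x y * pd2 q x y)
    (hcomp3 : ∀ x y, pd2 V x y = 2 * p x y * pd1 q x y + q x y * pd1 p x y)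
    (hLW1 : ∀ x y, pd1 (pd1 ψ) x y
        = (-(Complex.I * (p x y : ℂ))) • pd2 ψ x y
          + (((V x y : ℂ) + Complex.I * ((pd2 p x y : ℝ) : ℂ)) / 2) • ψ x y)
    (hLW2 : ∀ x y, pd2 (pd2 ψ) x y
        = (Complex.I * (q x y : ℂ)) • pd1 ψ x y
          + (((W x y : ℂ) - Complex.I * ((pd1 q x y : ℝ) : ℂ)) / 2) • ψ x y)
    (hgram : ∀ x y, ∀ i j : Fin 4,
      herm4 (![ψ x y, pd1 ψ x y, pd2 ψ x y, pd1 (pd2 ψ) x y] i)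
            (![ψ x y, pd1 ψ x y, pd2 ψ x y, pd1 (pd2 ψ) x y] j)
        = !![(0:ℂ), 0, 0, -1; 0, 0, 1, 0; 0, 1, 0, 0;
             -1, 0, 0, -((p x y * q x y : ℝ) : ℂ)] i j) :
    (∀ x y, Q6 (Uvec ψ x y) (Uvec ψ x y) = 0) ∧
    (∀ x y, Q6 (Svec ψ x y) (Svec ψ x y) = 0) ∧
    (∀ x y, ∀ i j : Fin 3,
      Q6 (![Uvec ψ, pd2 (Uvec ψ), pd2 (pd2 (Uvec ψ))] i x y)
         (![Svec ψ, pd1 (Svec ψ), pd1 (pd1 (Svec ψ))] j x y) = 0) := by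
  have hψ1 := contDiff_pd1 hψ
  have hψ2 := contDiff_pd2 hψ
  have hψ12 := contDiff_pd1 hψ2
  have hcomm := pd2_pd1_comm hψ
  have hU1 : pd2 (Uvec ψ) = fun x y => imVec (wedgeC (pd2 ψ x y) (pd1 ψ x y)
      + wedgeC (ψ x y) (pd1 (pd2 ψ) x y)) := by
    funext x y
    have h := hasDerivAt_wedgeC (hasDerivAt_pd2 hψ x y) (hasDerivAt_pd2 hψ1 x y)
    rw [hcomm] at h
    exact (hasDerivAt_imVec h).deriv
  have hS1 : pd1 (Svec ψ) = fun x y => reVec (wedgeC (pd1 ψ x y) (pd2 ψ x y)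
      + wedgeC (ψ x y) (pd1 (pd2 ψ) x y)) := by
    funext x y
    exact (hasDerivAt_reVec
      (hasDerivAt_wedgeC (hasDerivAt_pd1 hψ x y) (hasDerivAt_pd1 hψ2 x y))).deriv
  -- The third-order derivatives come from differentiating the system itself.
  have hU2 : pd2 (pd2 (Uvec ψ)) = fun x y => imVec (W x y • wedgeC (ψ x y) (pd1 ψ x y)
      + (2 : ℝ) • wedgeC (pd2 ψ x y) (pd1 (pd2 ψ) x y)
      + (p x y * q x y) • wedgeC (ψ x y) (pd2 ψ x y)) := by
    rw [hU1]
    funext x y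
    have hA := hasDerivAt_wedgeC (hasDerivAt_pd2 hψ2 x y) (hasDerivAt_pd2 hψ1 x y)
    have hB := hasDerivAt_wedgeC (hasDerivAt_pd2 hψ x y) (hasDerivAt_pd2 hψ12 x y)
    have hβ := (((hasDerivAt_pd1 hW x y).ofReal_comp).sub
      (((hasDerivAt_pd1 (contDiff_pd1 hq) x y).ofReal_comp).const_mul I)).div_const 2
    have h3 := (congrFun₂ (pd2_pd1_comm hψ2) x y).trans
      ((congrArg (fun F => pd1 F x y) (funext₂ hLW2)).trans (
        ((((hasDerivAt_pd1 hq x y).ofReal_comp.const_mul I).smul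
        (hasDerivAt_pd1 hψ1 x y)).add (hβ.smul (hasDerivAt_pd1 hψ x y))).deriv))
    rw [hcomm, hLW2] at hA
    rw [h3, hLW1] at hB
    refine (hasDerivAt_imVec (hA.add hB)).deriv.trans (congrArg imVec ?_)
    exact wedgeC_reduce2 _ _ _ _ _ _ _ _ _ _ _ rfl
  have hS2 : pd1 (pd1 (Svec ψ)) = fun x y => reVec (V x y • wedgeC (ψ x y) (pd2 ψ x y)
      + (2 : ℝ) • wedgeC (pd1 ψ x y) (pd1 (pd2 ψ) x y)
      + (p x y * q x y) • wedgeC (ψ x y) (pd1 ψ x y)) := by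
    rw [hS1]
    funext x y
    have hA := hasDerivAt_wedgeC (hasDerivAt_pd1 hψ1 x y) (hasDerivAt_pd1 hψ2 x y)
    have hB := hasDerivAt_wedgeC (hasDerivAt_pd1 hψ x y) (hasDerivAt_pd1 hψ12 x y)
    have hα := (((hasDerivAt_pd2 hV x y).ofReal_comp).add
      (((hasDerivAt_pd2 (contDiff_pd2 hp) x y).ofReal_comp).const_mul I)).div_const 2
    have h3 := (congrFun₂ (pd2_pd1_comm hψ1) x y).symm.trans
      ((congrArg (fun F => pd2 F x y) (funext₂ hLW1)).trans (
        ((((hasDerivAt_pd2 hp x y).ofReal_comp.const_mul I).neg.smul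
        (hasDerivAt_pd2 hψ2 x y)).add (hα.smul (hasDerivAt_pd2 hψ x y))).deriv))
    rw [hcomm] at h3
    rw [hLW1] at hA
    rw [h3, hLW2] at hB
    refine (hasDerivAt_reVec (hA.add hB)).deriv.trans (congrArg reVec ?_)
    exact wedgeC_reduce1 _ _ _ _ _ _ _ _ _ _ _ rfl
  have key := fun x y => frame_orthogonality _ _ _ _ _ (V x y) (W x y) (hgram x y)
  refine ⟨fun x y => (key x y).1, fun x y => (key x y).2.1, fun x y i j => ?_⟩
  have h := (key x y).2.2 i j
  rw [hU2, hU1, hS2, hS1]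
  fin_cases i <;> fin_cases j <;> exact h
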